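/- Let X be a complex analytic Banach manifold, and let E₁ ↪ E₂ and F₂ ↪ F₁ be dense continuous embeddings of complex Banach spaces. Suppose A : X → L(E₁,F₁) is analytic, each A(z) extends to a bounded operator E₂ → F₂, and the map z ↦ A(z) is locally uniformly bounded in the L(E₂,F₂) operator norm. Then A is analytic as a map from X into L(E₂,F₂). -/

import Mathlib

/-!
Write `Λ` for the injective map `T ↦ J₂ ∘ T ∘ J₁`. It has to be shown that a locally bounded `f`
is analytic as soon as `Λ ∘ f` is. The Cauchy formula cannot be applied to `f`, which is not known
to be measurable in the stronger norm. But an open set `U ⊆ ℂ` is, up to a null set, a countable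
disjoint union of closed discs `Bᵢ` with centres `cᵢ`, so by the mean value property
`∫ z in U, h z = ∑ᵢ vol(Bᵢ) h(cᵢ)` for every integrable holomorphic `h` on `U`. This sum makes
sense for `f` itself and converges absolutely since `f` is bounded. Taking for `U` an annulus
around `c` and for `h` the function `(z - c)⁻ⁿ Λ(f(z))`, whose mean over `U` is the `n`-th Taylor
coefficient of `Λ ∘ f`, one sees that this coefficient is the image under `Λ` of an element
satisfying the Cauchy estimate in the stronger norm. Polarization carries this over from
restrictions to complex lines to the multilinear Taylor coefficients, and the lifted power series
sums to `f` because `Λ` is injective.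
-/

open MeasureTheory Metric Set Real Topology

section CircleAverage

variable {E : Type*} [NormedAddCommGroup E] [NormedSpace ℝ E] {f : ℂ → E} {c : ℂ} {I : Set ℝ}

theorem integrableOn_smul_comp_polarCoord_symm (hf : Integrable f) :
    IntegrableOn (fun p : ℝ × ℝ ↦ p.1 • f (Complex.polarCoord.symm p)) polarCoord.target := by
  have hf' : Integrable (f ∘ Complex.measurableEquivRealProd.symm) :=
    Complex.volume_preserving_equiv_real_prod.symm.integrable_comp_of_integrable hf
  have h := (integrableOn_image_iff_integrableOn_abs_det_fderiv_smul volume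
    polarCoord.open_target.measurableSet
    (fun p _ ↦ (hasFDerivAt_polarCoord_symm p).hasFDerivWithinAt)
    polarCoord.symm.injOn (f ∘ Complex.measurableEquivRealProd.symm)).1 hf'.integrableOn
  refine h.congr_fun (fun p hp ↦ ?_) polarCoord.open_target.measurableSet
  simp only [det_fderivPolarCoordSymm, abs_of_pos (show 0 < p.1 from hp.1), Function.comp_apply,
    Complex.measurableEquivRealProd_symm_polarCoord_symm_apply]

theorem circleAverage_eq_integral_Ioo_polarCoord_symm (f : ℂ → E) (c : ℂ) (s : ℝ) :
    circleAverage f c s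
      = (2 * π)⁻¹ • ∫ θ in Ioo (-π) π, f (c + Complex.polarCoord.symm (s, θ)) := by
  rw [circleAverage_eq_integral_add (-π),
    intervalIntegral.integral_comp_add_right (fun θ ↦ f (circleMap c s θ)),
    intervalIntegral.integral_of_le (by linarith [pi_pos]), zero_add,
    show 2 * π + -π = π by ring, integral_Ioc_eq_integral_Ioo]
  simp only [circleMap, Complex.exp_mul_I, Complex.polarCoord_symm_apply, Complex.ofReal_cos,
    Complex.ofReal_sin]

theorem integral_eq_integral_Ioi_circleAverage (hf : Integrable f) (c : ℂ) :
    ∫ z, f z = ∫ s in Ioi (0 : ℝ), (2 * π * s) • circleAverage f c s := by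
  have hfc : Integrable fun z ↦ f (c + z) := hf.comp_add_left c
  rw [← integral_add_left_eq_self f c, ← Complex.integral_comp_polarCoord_symm]
  calc ∫ p in Ioi (0 : ℝ) ×ˢ Ioo (-π) π, p.1 • f (c + Complex.polarCoord.symm p)
      = ∫ s in Ioi (0 : ℝ), ∫ θ in Ioo (-π) π, s • f (c + Complex.polarCoord.symm (s, θ)) :=
        setIntegral_prod _ (integrableOn_smul_comp_polarCoord_symm hfc)
    _ = ∫ s in Ioi (0 : ℝ), (2 * π * s) • circleAverage f c s := by
        refine integral_congr_ae (.of_forall fun s ↦ ?_)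
        simp only [circleAverage_eq_integral_Ioo_polarCoord_symm, integral_smul, smul_smul]
        congr 1
        field_simp

theorem circleAverage_indicator_norm_sub_mem (f : ℂ → E) (c : ℂ) (I : Set ℝ) {s : ℝ}
    (hs : 0 ≤ s) :
    circleAverage ({z | ‖z - c‖ ∈ I}.indicator f) c s
      = I.indicator (circleAverage f c) s := by
  by_cases hsI : s ∈ I <;>
    simp [circleAverage_def, indicator, abs_of_nonneg hs, hsI]

theorem setIntegral_norm_sub_mem_eq_setIntegral_circleAverage (hI : MeasurableSet I)
    (hf : IntegrableOn f {z | ‖z - c‖ ∈ I}) :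
    ∫ z in {z | ‖z - c‖ ∈ I}, f z
      = ∫ s in I ∩ Ioi 0, (2 * π * s) • circleAverage f c s := by
  have hD : MeasurableSet {z : ℂ | ‖z - c‖ ∈ I} := by measurability
  rw [← integral_indicator hD,
    integral_eq_integral_Ioi_circleAverage (hf.integrable_indicator hD) c, inter_comm,
    ← setIntegral_indicator hI]
  refine setIntegral_congr_fun measurableSet_Ioi fun s hs ↦ ?_
  simp only [circleAverage_indicator_norm_sub_mem f c I hs.le]
  by_cases hsI : s ∈ I <;> simp [hsI]

theorem setIntegral_norm_sub_mem_of_circleAverage_eq [CompleteSpace E] {a : E}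
    (hI : MeasurableSet I)
    (hvol : volume {z | ‖z - c‖ ∈ I} ≠ ⊤) (hf : IntegrableOn f {z | ‖z - c‖ ∈ I})
    (ha : ∀ s ∈ I, 0 < s → circleAverage f c s = a) :
    ∫ z in {z | ‖z - c‖ ∈ I}, f z = volume.real {z | ‖z - c‖ ∈ I} • a := by
  have hone : volume.real {z | ‖z - c‖ ∈ I} = ∫ s in I ∩ Ioi 0, 2 * π * s := by
    have h := setIntegral_norm_sub_mem_eq_setIntegral_circleAverage (c := c) hI
      (integrableOn_const (C := (1 : ℝ)) hvol)
    simpa [circleAverage_const] using h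
  rw [hone, setIntegral_norm_sub_mem_eq_setIntegral_circleAverage hI hf, ← integral_smul_const]
  refine setIntegral_congr_fun (hI.inter measurableSet_Ioi) fun s hs ↦ ?_
  simp only [ha s hs.1 hs.2]

end CircleAverage

section Quadrature

variable {E : Type*} [NormedAddCommGroup E] [NormedSpace ℂ E]
  {f : ℂ → E} {U s : Set ℂ} {r : ℂ → ℝ}

theorem integrableOn_of_differentiableOn_of_norm_le {C : ℝ} (hf : DifferentiableOn ℂ f U)
    (hU : IsOpen U) (hfin : volume U ≠ ⊤) (hC : ∀ z ∈ U, ‖f z‖ ≤ C) : IntegrableOn f U :=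
  .of_bound hfin.lt_top (hf.continuousOn.aestronglyMeasurable hU.measurableSet) C
    ((ae_restrict_iff' hU.measurableSet).2 (.of_forall hC))

variable [CompleteSpace E]

theorem setIntegral_closedBall_eq_smul_center {c : ℂ} {r : ℝ}
    (hf : DifferentiableOn ℂ f (closedBall c r)) :
    ∫ z in closedBall c r, f z = volume.real (closedBall c r) • f c := by
  have hball : closedBall c r = {z | ‖z - c‖ ∈ Iic r} := by
    ext z; simp [dist_eq_norm]
  have hfin : volume (closedBall c r) ≠ ⊤ := measure_closedBall_lt_top.ne
  have hint : IntegrableOn f (closedBall c r) :=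
    hf.continuousOn.integrableOn_compact (isCompact_closedBall c r)
  rw [hball] at hfin hint ⊢
  refine setIntegral_norm_sub_mem_of_circleAverage_eq measurableSet_Iic hfin hint fun s hs h0 ↦ ?_
  refine DiffContOnCl.circleAverage (DifferentiableOn.diffContOnCl (hf.mono ?_))
  rw [abs_of_pos h0]
  exact closure_ball_subset_closedBall.trans (closedBall_subset_closedBall hs)

/-- A packing of `U` by disjoint closed discs `closedBall c (r c)`, `c ∈ s`, whose complement in `U`
is a null set. It turns area integrals of holomorphic functions into absolutely convergent sums of
values at the centres. The values of `r` outside `s` are irrelevant. -/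
structure IsFullDiscPacking (U s : Set ℂ) (r : ℂ → ℝ) : Prop where
  countable : s.Countable
  pos : ∀ c ∈ s, 0 < r c
  closedBall_subset : ∀ c ∈ s, closedBall c (r c) ⊆ U
  pairwiseDisjoint : s.PairwiseDisjoint fun c ↦ closedBall c (r c)
  volume_diff : volume (U \ ⋃ c ∈ s, closedBall c (r c)) = 0

theorem exists_isFullDiscPacking (hU : IsOpen U) :
    ∃ (s : Set ℂ) (r : ℂ → ℝ), IsFullDiscPacking U s r := by
  have hsmall : ∀ c ∈ U, ∀ δ > 0, ({ρ | closedBall c ρ ⊆ U} ∩ Ioo 0 δ).Nonempty := by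
    intro c hc δ hδ
    obtain ⟨ε, hε, hεU⟩ := nhds_basis_closedBall.mem_iff.1 (hU.mem_nhds hc)
    exact ⟨min ε (δ / 2), (closedBall_subset_closedBall (min_le_left _ _)).trans hεU,
      by positivity, (min_le_right _ _).trans_lt (half_lt_self hδ)⟩
  obtain ⟨s, r, hs, -, hr, hvol, hdisj⟩ :=
    Besicovitch.exists_disjoint_closedBall_covering_ae volume _ U hsmall (fun _ ↦ 1)
      fun _ _ ↦ one_pos
  exact ⟨s, r, hs, fun c hc ↦ (hr c hc).2.1, fun c hc ↦ (hr c hc).1, hdisj, hvol⟩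

namespace IsFullDiscPacking

theorem iUnion_ae_eq (h : IsFullDiscPacking U s r) :
    (⋃ c : s, closedBall (c : ℂ) (r c)) =ᵐ[volume] U := by
  rw [← biUnion_eq_iUnion (s := s) (t := fun c _ ↦ closedBall c (r c))]
  exact (iUnion₂_subset h.closedBall_subset).eventuallyLE.antisymm (ae_le_set.2 h.volume_diff)

theorem hasSum_setIntegral {F : Type*} [NormedAddCommGroup F] [NormedSpace ℝ F] {f : ℂ → F}
    (h : IsFullDiscPacking U s r) (hf : IntegrableOn f U) :
    HasSum (fun c : s ↦ ∫ z in closedBall (c : ℂ) (r c), f z) (∫ z in U, f z) := by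
  have := h.countable.to_subtype
  rw [← setIntegral_congr_set h.iUnion_ae_eq]
  exact hasSum_integral_iUnion (fun _ ↦ measurableSet_closedBall)
    (fun c d hcd ↦ h.pairwiseDisjoint c.2 d.2 (Subtype.coe_ne_coe.2 hcd))
    (hf.congr_set_ae h.iUnion_ae_eq)

theorem hasSum_volume (h : IsFullDiscPacking U s r) (hU : volume U ≠ ⊤) :
    HasSum (fun c : s ↦ volume.real (closedBall (c : ℂ) (r c))) (volume.real U) := by
  simpa using h.hasSum_setIntegral (integrableOn_const (C := (1 : ℝ)) hU)

theorem hasSum_smul_center (h : IsFullDiscPacking U s r) (hf : DifferentiableOn ℂ f U)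
    (hint : IntegrableOn f U) :
    HasSum (fun c : s ↦ volume.real (closedBall (c : ℂ) (r c)) • f c) (∫ z in U, f z) :=
  (h.hasSum_setIntegral hint).congr_fun fun c ↦
    (setIntegral_closedBall_eq_smul_center (hf.mono (h.closedBall_subset c c.2))).symm

theorem exists_hasSum_smul_center {H : Type*} [NormedAddCommGroup H] [NormedSpace ℝ H]
    [CompleteSpace H] {g : ℂ → H} {C : ℝ} (h : IsFullDiscPacking U s r) (hU : volume U ≠ ⊤)
    (hg : ∀ z ∈ U, ‖g z‖ ≤ C) :
    ∃ S, HasSum (fun c : s ↦ volume.real (closedBall (c : ℂ) (r c)) • g c) S ∧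
      ‖S‖ ≤ volume.real U * C := by
  have hbound := (h.hasSum_volume hU).mul_right C
  have hterm (c : s) : ‖volume.real (closedBall (c : ℂ) (r c)) • g c‖
      ≤ volume.real (closedBall (c : ℂ) (r c)) * C := by
    rw [norm_smul, Real.norm_of_nonneg measureReal_nonneg]
    gcongr
    exact hg c (h.closedBall_subset c c.2 (mem_closedBall_self (h.pos c c.2).le))
  exact ⟨_, (Summable.of_norm_bounded hbound.summable hterm).hasSum,
    tsum_of_norm_bounded hbound hterm⟩

end IsFullDiscPacking

theorem exists_map_eq_setAverage {H : Type*} [NormedAddCommGroup H] [NormedSpace ℂ H]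
    [CompleteSpace H] (Λ : H →L[ℂ] E) {g : ℂ → H} {C : ℝ} (hU : IsOpen U) (hne : U.Nonempty)
    (hfin : volume U ≠ ⊤) (hΛg : DifferentiableOn ℂ (Λ ∘ g) U) (hg : ∀ z ∈ U, ‖g z‖ ≤ C) :
    ∃ a, Λ a = ⨍ z in U, Λ (g z) ∧ ‖a‖ ≤ C := by
  obtain ⟨s, r, hs⟩ := exists_isFullDiscPacking hU
  obtain ⟨S, hS, hSC⟩ := hs.exists_hasSum_smul_center hfin hg
  have hint : IntegrableOn (Λ ∘ g) U :=
    integrableOn_of_differentiableOn_of_norm_le hΛg hU hfin fun z hz ↦ Λ.le_opNorm_of_le (hg z hz)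
  have hΛS : Λ S = ∫ z in U, Λ (g z) := by
    refine (Λ.hasSum hS).unique ((hs.hasSum_smul_center hΛg hint).congr_fun fun c ↦ ?_)
    simp [← Complex.coe_smul]
  have hpos : 0 < volume.real U := ENNReal.toReal_pos (hU.measure_pos volume hne).ne' hfin
  refine ⟨(volume.real U)⁻¹ • S, ?_, ?_⟩
  · rw [← Complex.coe_smul, map_smul, hΛS, Complex.coe_smul, setAverage_eq]
  · rwa [norm_smul, norm_inv, Real.norm_of_nonneg hpos.le, inv_mul_le_iff₀ hpos]

end Quadrature

section Coefficients

variable {H K : Type*} [NormedAddCommGroup H] [NormedSpace ℂ H]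
  [NormedAddCommGroup K] [NormedSpace ℂ K] [CompleteSpace K] {c : ℂ} {r R : ℝ}
  {p : FormalMultilinearSeries ℂ ℂ K}

/-- The open annulus of inner radius `r` and outer radius `R` centred at `c`, over which Taylor
coefficients at `c` are computed as area averages. -/
def openAnnulus (c : ℂ) (r R : ℝ) : Set ℂ :=
  {z | ‖z - c‖ ∈ Ioo r R}

theorem isOpen_openAnnulus (c : ℂ) (r R : ℝ) : IsOpen (openAnnulus c r R) :=
  isOpen_Ioo.preimage (by fun_prop)

theorem openAnnulus_subset_ball (c : ℂ) (r R : ℝ) : openAnnulus c r R ⊆ ball c R :=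
  fun z hz ↦ by simpa [dist_eq_norm] using hz.2

theorem volume_openAnnulus_ne_top (c : ℂ) (r R : ℝ) : volume (openAnnulus c r R) ≠ ⊤ :=
  measure_ne_top_of_subset (openAnnulus_subset_ball c r R) measure_ball_lt_top.ne

theorem openAnnulus_nonempty (hr : 0 ≤ r) (hrR : r < R) : (openAnnulus c r R).Nonempty := by
  obtain ⟨t, ht⟩ := exists_between hrR
  exact ⟨c + t, by simpa [openAnnulus, abs_of_pos (hr.trans_lt ht.1)] using ht⟩

theorem circleAverage_inv_pow_smul_eq_coeff {h : ℂ → K} {s : ℝ}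
    (hp : HasFPowerSeriesOnBall h p c (ENNReal.ofReal R)) (hs : 0 < s) (hsR : s < R) (n : ℕ) :
    circleAverage (fun z ↦ ((z - c) ^ n)⁻¹ • h z) c s = p.coeff n := by
  lift s to NNReal using hs.le
  have hdiff : DifferentiableOn ℂ h (closedBall c s) := by
    refine hp.differentiableOn.mono fun z hz ↦ ?_
    rw [mem_eball, edist_dist]
    exact (ENNReal.ofReal_lt_ofReal_iff (hs.trans hsR)).2 ((mem_closedBall.1 hz).trans_lt hsR)
  have hcauchy := hdiff.hasFPowerSeriesOnBall (by exact_mod_cast hs)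
  rw [hp.hasFPowerSeriesAt.eq_formalMultilinearSeries hcauchy.hasFPowerSeriesAt,
    circleAverage_eq_circleIntegral hs.ne', FormalMultilinearSeries.coeff,
    show (1 : Fin n → ℂ) = fun _ ↦ 1 from rfl, cauchyPowerSeries_apply]
  simp only [one_div, inv_pow, smul_comm ((_ - c) ^ n)⁻¹]

theorem setAverage_openAnnulus_inv_pow_smul_eq_coeff {h : ℂ → K}
    (hp : HasFPowerSeriesOnBall h p c (ENNReal.ofReal R)) (hr : 0 ≤ r) (hrR : r < R) (n : ℕ)
    (hint : IntegrableOn (fun z ↦ ((z - c) ^ n)⁻¹ • h z) (openAnnulus c r R)) :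
    ⨍ z in openAnnulus c r R, ((z - c) ^ n)⁻¹ • h z = p.coeff n := by
  have hfin := volume_openAnnulus_ne_top c r R
  have hpos : volume.real (openAnnulus c r R) ≠ 0 := (ENNReal.toReal_pos
    ((isOpen_openAnnulus c r R).measure_pos volume (openAnnulus_nonempty hr hrR)).ne' hfin).ne'
  rw [setAverage_eq, inv_smul_eq_iff₀ hpos]
  exact setIntegral_norm_sub_mem_of_circleAverage_eq measurableSet_Ioo hfin hint fun s hs h0 ↦
    circleAverage_inv_pow_smul_eq_coeff hp h0 hs.2 n

theorem exists_map_eq_coeff_of_norm_le [CompleteSpace H] (Λ : H →L[ℂ] K) {g : ℂ → H} {M : ℝ}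
    (hr : 0 < r) (hrR : r < R)
    (hp : HasFPowerSeriesOnBall (Λ ∘ g) p c (ENNReal.ofReal R))
    (hM : ∀ z ∈ ball c R, ‖g z‖ ≤ M) (n : ℕ) :
    ∃ a, Λ a = p.coeff n ∧ ‖a‖ ≤ M / r ^ n := by
  have hsub := openAnnulus_subset_ball c r R
  have hdiff : DifferentiableOn ℂ (Λ ∘ fun z ↦ ((z - c) ^ n)⁻¹ • g z) (openAnnulus c r R) := by
    have hpow : DifferentiableOn ℂ (fun z : ℂ ↦ ((z - c) ^ n)⁻¹) (openAnnulus c r R) :=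
      .inv (by fun_prop) fun z hz ↦ pow_ne_zero n (norm_pos_iff.1 (hr.trans hz.1))
    refine (hpow.smul (hp.differentiableOn.mono ?_)).congr fun z _ ↦ map_smul Λ _ _
    rwa [Metric.eball_ofReal]
  have hbound : ∀ z ∈ openAnnulus c r R, ‖((z - c) ^ n)⁻¹ • g z‖ ≤ M / r ^ n := by
    intro z hz
    rw [norm_smul, norm_inv, norm_pow, div_eq_inv_mul]
    gcongr
    exacts [hz.1.le, hM z (hsub hz)]
  have hopen := isOpen_openAnnulus c r R
  have hfin := volume_openAnnulus_ne_top c r R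
  have hint := integrableOn_of_differentiableOn_of_norm_le hdiff hopen hfin
    fun z hz ↦ Λ.le_opNorm_of_le (hbound z hz)
  obtain ⟨a, ha, haM⟩ := exists_map_eq_setAverage Λ hopen
    (openAnnulus_nonempty hr.le hrR) hfin hdiff hbound
  simp only [Function.comp_def, map_smul] at hint ha
  exact ⟨a, ha.trans (setAverage_openAnnulus_inv_pow_smul_eq_coeff hp hr.le hrR n hint), haM⟩

end Coefficients

section Polarization

variable {ι : Type*} [Fintype ι] [DecidableEq ι]

theorem sum_neg_one_pow_card_subset_compl_image (s : ι → ι) :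
    ∑ T : Finset ι with T ⊆ (Finset.univ.image s)ᶜ, (-1 : ℤ) ^ T.card
      = if Function.Bijective s then 1 else 0 := by
  have hrange : (Finset.univ.image s)ᶜ = ∅ ↔ Function.Bijective s := by
    rw [Finset.compl_eq_empty_iff, ← Finite.surjective_iff_bijective, Finset.eq_univ_iff_forall]
    simp only [Finset.mem_image, Finset.mem_univ, true_and, Function.Surjective]
  simp only [Finset.filter_subset_univ, Finset.sum_powerset_neg_one_pow_card, hrange]

theorem sum_bijective_eq_sum_perm {N : Type*} [AddCommMonoid N] (F : (ι → ι) → N) :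
    ∑ s with Function.Bijective s, F s = ∑ σ : Equiv.Perm ι, F σ := by
  symm
  refine Finset.sum_bij (fun (σ : Equiv.Perm ι) _ ↦ ⇑σ) (fun σ _ ↦ by simp)
    (fun _ _ _ _ h ↦ DFunLike.coe_injective h) (fun s hs ↦ ?_) fun _ _ ↦ rfl
  exact ⟨Equiv.ofBijective s (Finset.mem_filter.1 hs).2, Finset.mem_univ _, rfl⟩

variable {R M N : Type*} [Semiring R] [AddCommMonoid M] [Module R M] [AddCommGroup N]
  [Module R N]

theorem sum_neg_one_pow_card_smul_map_sum_compl (f : MultilinearMap R (fun _ : ι ↦ M) N)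
    (v : ι → M) :
    ∑ T : Finset ι, (-1 : ℤ) ^ T.card • f (fun _ ↦ ∑ i ∈ Tᶜ, v i)
      = ∑ σ : Equiv.Perm ι, f fun i ↦ v (σ i) := by
  have hexpand (T : Finset ι) : f (fun _ ↦ ∑ i ∈ Tᶜ, v i)
      = ∑ s : ι → ι, if T ⊆ (Finset.univ.image s)ᶜ then f (fun i ↦ v (s i)) else 0 := by
    rw [f.map_sum_finset (fun _ i ↦ v i) fun _ ↦ Tᶜ, ← Finset.sum_filter]
    refine Finset.sum_congr (Finset.ext fun s ↦ ?_) fun _ _ ↦ rfl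
    simp only [Fintype.mem_piFinset, Finset.mem_compl, Finset.mem_filter, Finset.mem_univ,
      true_and, Finset.subset_iff, Finset.mem_image, not_exists]
    exact ⟨fun h x hx i hi ↦ h i (hi ▸ hx), fun h i hi ↦ h hi i rfl⟩
  calc ∑ T : Finset ι, (-1 : ℤ) ^ T.card • f (fun _ ↦ ∑ i ∈ Tᶜ, v i)
      = ∑ s : ι → ι, (∑ T : Finset ι with T ⊆ (Finset.univ.image s)ᶜ, (-1 : ℤ) ^ T.card)
          • f fun i ↦ v (s i) := by
        simp only [hexpand, Finset.smul_sum, Finset.sum_filter, Finset.sum_smul, smul_ite,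
          smul_zero, ite_smul, zero_smul]
        exact Finset.sum_comm
    _ = ∑ s : ι → ι with Function.Bijective s, f fun i ↦ v (s i) := by
        rw [Finset.sum_filter]
        refine Finset.sum_congr rfl fun s _ ↦ ?_
        rw [sum_neg_one_pow_card_subset_compl_image, ite_smul, one_smul, zero_smul]
    _ = ∑ σ : Equiv.Perm ι, f fun i ↦ v (σ i) :=
        sum_bijective_eq_sum_perm fun s ↦ f fun i ↦ v (s i)

end Polarization

section MultilinearLift

variable {𝕜 Z H K ι : Type*} [RCLike 𝕜] [NormedAddCommGroup Z] [NormedSpace 𝕜 Z]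
  [NormedAddCommGroup H] [NormedSpace 𝕜 H] [AddCommGroup K] [Module 𝕜 K] [Fintype ι]

theorem exists_continuousMultilinearMap_map_eq (Λ : H →ₗ[𝕜] K) (hΛ : Function.Injective Λ)
    (D : MultilinearMap 𝕜 (fun _ : ι ↦ Z) K) {C : ℝ}
    (hD : ∀ v, (∀ i, ‖v i‖ ≤ 1) → ∃ a, Λ a = D v ∧ ‖a‖ ≤ C) :
    ∃ Q : ContinuousMultilinearMap 𝕜 (fun _ : ι ↦ Z) H, (∀ v, Λ (Q v) = D v) ∧ ‖Q‖ ≤ C := by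
  have hscale (v : ι → Z) : ∃ a, Λ a = D v ∧ ‖a‖ ≤ C * ∏ i, ‖v i‖ := by
    obtain ⟨a, ha, haC⟩ := hD (fun i ↦ (‖v i‖⁻¹ : 𝕜) • v i) fun i ↦ by
      simpa [norm_smul] using inv_mul_le_one
    refine ⟨(∏ i, (‖v i‖ : 𝕜)) • a, ?_, ?_⟩
    · rw [map_smul, ha, ← D.map_smul_univ]
      congr with i
      by_cases hi : v i = 0 <;> simp [hi]
    · rw [norm_smul, norm_prod, mul_comm]
      simp only [RCLike.norm_ofReal, abs_norm]
      gcongr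
  have hrange (v : ι → Z) : D v ∈ LinearMap.range Λ := (hscale v).imp fun _ h ↦ h.1
  let Q : MultilinearMap 𝕜 (fun _ : ι ↦ Z) H :=
    (LinearEquiv.ofInjective Λ hΛ).symm.toLinearMap.compMultilinearMap (D.codRestrict _ hrange)
  have hQ (v : ι → Z) : Λ (Q v) = D v :=
    congrArg Subtype.val ((LinearEquiv.ofInjective Λ hΛ).apply_symm_apply ⟨D v, hrange v⟩)
  have hQC (v : ι → Z) : ‖Q v‖ ≤ C * ∏ i, ‖v i‖ := by
    obtain ⟨a, ha, haC⟩ := hscale v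
    rwa [hΛ ((hQ v).trans ha.symm)]
  obtain ⟨a, -, haC⟩ := hD 0 (by simp)
  exact ⟨Q.mkContinuous C hQC, hQ, Q.mkContinuous_norm_le ((norm_nonneg a).trans haC) hQC⟩

end MultilinearLift

section Lift

variable {Z H K : Type*} [NormedAddCommGroup Z] [NormedSpace ℂ Z]
  [NormedAddCommGroup H] [NormedSpace ℂ H] [CompleteSpace H]
  [NormedAddCommGroup K] [NormedSpace ℂ K] [CompleteSpace K] {Λ : H →L[ℂ] K} {f : Z → H}
  {p : FormalMultilinearSeries ℂ Z K} {z₀ : Z} {r R M : ℝ}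

theorem exists_map_eq_apply_diag_of_norm_le_one (hr : 0 < r) (hrR : r < R)
    (hp : HasFPowerSeriesOnBall (Λ ∘ f) p z₀ (ENNReal.ofReal R))
    (hM : ∀ z ∈ ball z₀ R, ‖f z‖ ≤ M) (n : ℕ) {y : Z} (hy : ‖y‖ ≤ 1) :
    ∃ a, Λ a = p n (fun _ ↦ y) ∧ ‖a‖ ≤ M / r ^ n := by
  let line : ℂ →L[ℂ] Z := .toSpanSingleton ℂ y
  have hline : ‖line‖ₑ ≤ 1 := by
    rw [← ofReal_norm, ContinuousLinearMap.norm_toSpanSingleton]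
    exact ENNReal.ofReal_le_one.2 hy
  have hp' : HasFPowerSeriesOnBall (fun z ↦ Λ (f (z₀ + z))) p (line 0) (ENNReal.ofReal R) := by
    simpa [add_comm] using hp.comp_sub (-z₀)
  have hpline : HasFPowerSeriesOnBall (Λ ∘ fun ζ ↦ f (z₀ + line ζ))
      (p.compContinuousLinearMap line) 0 (ENNReal.ofReal R) :=
    hp'.compContinuousLinearMap.mono hp.r_pos (by simpa using ENNReal.div_le_div_left hline _)
  have hMline : ∀ ζ ∈ ball (0 : ℂ) R, ‖f (z₀ + line ζ)‖ ≤ M := by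
    intro ζ hζ
    refine hM _ ?_
    rw [mem_ball_iff_norm, add_sub_cancel_left, ContinuousLinearMap.toSpanSingleton_apply,
      norm_smul]
    exact (mul_le_of_le_one_right (norm_nonneg ζ) hy).trans_lt (mem_ball_zero_iff.1 hζ)
  obtain ⟨a, ha, haM⟩ := exists_map_eq_coeff_of_norm_le Λ hr hrR hpline hMline n
  refine ⟨a, ha.trans ?_, haM⟩
  rw [FormalMultilinearSeries.coeff, FormalMultilinearSeries.compContinuousLinearMap_apply]
  congr with i
  simp [line]

theorem exists_map_eq_apply_diag (hr : 0 < r) (hrR : r < R)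
    (hp : HasFPowerSeriesOnBall (Λ ∘ f) p z₀ (ENNReal.ofReal R))
    (hM : ∀ z ∈ ball z₀ R, ‖f z‖ ≤ M) (n : ℕ) (y : Z) :
    ∃ a, Λ a = p n (fun _ ↦ y) ∧ ‖a‖ ≤ M * (‖y‖ / r) ^ n := by
  have hy : (‖y‖ : ℂ) • (‖y‖⁻¹ : ℂ) • y = y := by
    by_cases h : y = 0 <;> simp [h]
  obtain ⟨a, ha, haM⟩ := exists_map_eq_apply_diag_of_norm_le_one hr hrR hp hM n
    (y := (‖y‖⁻¹ : ℂ) • y) (by simpa [norm_smul] using inv_mul_le_one)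
  refine ⟨(‖y‖ ^ n : ℂ) • a, ?_, ?_⟩
  · calc Λ ((‖y‖ ^ n : ℂ) • a) = p n fun _ ↦ (‖y‖ : ℂ) • (‖y‖⁻¹ : ℂ) • y := by
          rw [map_smul, ha, (p n).map_smul_univ fun _ ↦ (‖y‖ : ℂ), Fin.prod_const]
      _ = p n fun _ ↦ y := by rw [hy]
  · calc ‖(‖y‖ ^ n : ℂ) • a‖ = ‖y‖ ^ n * ‖a‖ := by simp [norm_smul]
      _ ≤ ‖y‖ ^ n * (M / r ^ n) := by gcongr
      _ = M * (‖y‖ / r) ^ n := by ring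

theorem exists_map_eq_iteratedFDeriv (hr : 0 < r) (hrR : r < R)
    (hp : HasFPowerSeriesOnBall (Λ ∘ f) p z₀ (ENNReal.ofReal R))
    (hM : ∀ z ∈ ball z₀ R, ‖f z‖ ≤ M) (n : ℕ) {v : Fin n → Z} (hv : ∀ i, ‖v i‖ ≤ 1) :
    ∃ a, Λ a = iteratedFDeriv ℂ n (Λ ∘ f) z₀ v ∧ ‖a‖ ≤ M * (2 / r * n) ^ n := by
  choose a ha haM using exists_map_eq_apply_diag hr hrR hp hM n
  have hM0 : 0 ≤ M := (norm_nonneg _).trans (hM z₀ (mem_ball_self (hr.trans hrR)))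
  have hsum (T : Finset (Fin n)) : ‖∑ i ∈ T, v i‖ ≤ n :=
    calc ‖∑ i ∈ T, v i‖ ≤ ∑ i ∈ T, ‖v i‖ := norm_sum_le T v
      _ ≤ T.card • (1 : ℝ) := Finset.sum_le_card_nsmul _ _ _ fun i _ ↦ hv i
      _ ≤ n := by simpa using T.card_le_univ
  have hterm (T : Finset (Fin n)) :
      ‖(-1 : ℤ) ^ T.card • a (∑ i ∈ Tᶜ, v i)‖ ≤ M * (n / r) ^ n :=
    calc ‖(-1 : ℤ) ^ T.card • a (∑ i ∈ Tᶜ, v i)‖ = ‖a (∑ i ∈ Tᶜ, v i)‖ := by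
          rcases neg_one_pow_eq_or ℤ T.card with h | h <;> simp [h]
      _ ≤ M * (‖∑ i ∈ Tᶜ, v i‖ / r) ^ n := haM _
      _ ≤ M * (n / r) ^ n := by gcongr; exact hsum Tᶜ
  refine ⟨∑ T : Finset (Fin n), (-1 : ℤ) ^ T.card • a (∑ i ∈ Tᶜ, v i), ?_, ?_⟩
  · rw [hp.iteratedFDeriv_eq_sum_of_completeSpace, map_sum]
    simp only [map_zsmul, ha]
    exact sum_neg_one_pow_card_smul_map_sum_compl (p n).toMultilinearMap v
  · calc ‖∑ T : Finset (Fin n), (-1 : ℤ) ^ T.card • a (∑ i ∈ Tᶜ, v i)‖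
        ≤ Fintype.card (Finset (Fin n)) • (M * (n / r) ^ n) :=
          norm_sum_le_of_le _ (fun T _ ↦ hterm T) |>.trans_eq (by simp)
      _ = M * (2 / r * n) ^ n := by
          simp only [Fintype.card_finset, Fintype.card_fin, nsmul_eq_mul]
          push_cast
          ring

end Lift

section PowerSeries

variable {𝕜 E F G : Type*} [NontriviallyNormedField 𝕜] [NormedAddCommGroup E] [NormedSpace 𝕜 E]
  [NormedAddCommGroup F] [NormedSpace 𝕜 F]

theorem radius_pos_of_norm_le_mul_pow_div_factorial (q : FormalMultilinearSeries 𝕜 E F) {C a : ℝ}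
    (ha : 0 < a) (hq : ∀ n, ‖q n‖ ≤ C * (a * n) ^ n / n.factorial) : 0 < q.radius := by
  have hC : 0 ≤ C := (norm_nonneg (q 0)).trans (by simpa using hq 0)
  refine (ENNReal.ofReal_pos.2 (show 0 < (a * exp 1)⁻¹ by positivity)).trans_le
    (q.le_radius_of_bound C fun n ↦ ?_)
  rw [Real.coe_toNNReal _ (by positivity)]
  calc ‖q n‖ * (a * exp 1)⁻¹ ^ n
      ≤ C * (a * n) ^ n / n.factorial * (a * exp 1)⁻¹ ^ n := by gcongr; exact hq n
    _ = C * ((n : ℝ) ^ n / n.factorial) / exp n := by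
        rw [← exp_one_pow n, mul_inv, mul_pow, mul_pow, inv_pow, inv_pow]
        field_simp
    _ ≤ C * exp n / exp n := by
        gcongr
        exact pow_div_factorial_le_exp n n.cast_nonneg n
    _ = C := mul_div_cancel_right₀ C (exp_pos n).ne'

theorem hasFPowerSeriesOnBall_of_injective [CompleteSpace F] [NormedAddCommGroup G]
    [NormedSpace 𝕜 G] {Λ : F →L[𝕜] G} (hΛ : Function.Injective Λ)
    {q : FormalMultilinearSeries 𝕜 E F} {f : E → F} {z₀ : E} {R : ENNReal} (hq : 0 < q.radius)
    (hR : 0 < R)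
    (hf : ∀ y ∈ eball 0 R, HasSum (fun n ↦ Λ (q n fun _ ↦ y)) (Λ (f (z₀ + y)))) :
    HasFPowerSeriesOnBall f q z₀ (min q.radius R) where
  r_le := min_le_left _ _
  r_pos := lt_min hq hR
  hasSum {y} hy := by
    have hsum := q.hasSum (eball_subset_eball (min_le_left _ _) hy)
    rwa [← hΛ ((Λ.hasSum hsum).unique (hf y (eball_subset_eball (min_le_right _ _) hy)))]

end PowerSeries

section Analytic

variable {Z H K : Type*} [NormedAddCommGroup Z] [NormedSpace ℂ Z]
  [NormedAddCommGroup H] [NormedSpace ℂ H] [CompleteSpace H]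
  [NormedAddCommGroup K] [NormedSpace ℂ K] {Λ : H →L[ℂ] K} {f : Z → H}
  {p : FormalMultilinearSeries ℂ Z K} {z₀ : Z} {R M : ℝ}

theorem analyticAt_of_injective_of_norm_le_on_ball [CompleteSpace K]
    (hΛ : Function.Injective Λ) (hR : 0 < R)
    (hp : HasFPowerSeriesOnBall (Λ ∘ f) p z₀ (ENNReal.ofReal R))
    (hM : ∀ z ∈ ball z₀ R, ‖f z‖ ≤ M) : AnalyticAt ℂ f z₀ := by
  choose Q hQ hQM using fun n ↦ exists_continuousMultilinearMap_map_eq Λ.toLinearMap hΛ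
    (iteratedFDeriv ℂ n (Λ ∘ f) z₀).toMultilinearMap
    fun v hv ↦ exists_map_eq_iteratedFDeriv (half_pos hR) (half_lt_self hR) hp hM n hv
  let q : FormalMultilinearSeries ℂ Z H := fun n ↦ (n.factorial : ℂ)⁻¹ • Q n
  have hq : 0 < q.radius := by
    refine radius_pos_of_norm_le_mul_pow_div_factorial q (C := M) (a := 2 / (R / 2)) (by positivity)
      fun n ↦ ?_
    rw [norm_smul, norm_inv, Complex.norm_natCast, div_eq_inv_mul]
    gcongr
    exact hQM n
  refine (hasFPowerSeriesOnBall_of_injective hΛ hq hp.r_pos fun y hy ↦ ?_).analyticAt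
  refine (hp.hasSum_iteratedFDeriv hy).congr_fun fun n ↦ ?_
  rw [smul_apply, map_smul]
  exact congrArg _ (hQ n fun _ ↦ y)

theorem analyticAt_of_injective_comp (hΛ : Function.Injective Λ)
    (hf : AnalyticAt ℂ (Λ ∘ f) z₀) (hM : ∀ᶠ z in 𝓝 z₀, ‖f z‖ ≤ M) : AnalyticAt ℂ f z₀ := by
  let ι : K →L[ℂ] UniformSpace.Completion K := UniformSpace.Completion.toComplL
  obtain ⟨p, ρ, hp⟩ := (ι.analyticAt _).comp hf
  obtain ⟨ε, hε, hM⟩ := Metric.eventually_nhds_iff_ball.1 hM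
  obtain ⟨R, -, hR, hRlt⟩ := ENNReal.lt_iff_exists_real_btwn.1
    (lt_min hp.r_pos (ENNReal.ofReal_pos.2 hε))
  have hRε : R ≤ ε := (ENNReal.ofReal_lt_ofReal_iff hε).1 (hRlt.trans_le (min_le_right _ _)) |>.le
  exact analyticAt_of_injective_of_norm_le_on_ball (Λ := ι ∘L Λ)
    (UniformSpace.Completion.coe_injective K |>.comp hΛ) (ENNReal.ofReal_pos.1 hR)
    (hp.mono hR (hRlt.le.trans (min_le_left _ _))) fun z hz ↦ hM z (ball_subset_ball hRε hz)

end Analytic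

section Operators

variable {𝕜 E₁ E₂ F₁ F₂ : Type*} [NontriviallyNormedField 𝕜]
  [NormedAddCommGroup E₁] [NormedSpace 𝕜 E₁] [NormedAddCommGroup E₂] [NormedSpace 𝕜 E₂]
  [NormedAddCommGroup F₁] [NormedSpace 𝕜 F₁] [NormedAddCommGroup F₂] [NormedSpace 𝕜 F₂]

/-- The map `L(E₂, F₂) → L(E₁, F₁)`, `T ↦ J₂ ∘ T ∘ J₁`, which restricts an operator to `E₁`
along `J₁` and reads its values in `F₁` through `J₂`. -/
noncomputable def compLeftRightL (J₁ : E₁ →L[𝕜] E₂) (J₂ : F₂ →L[𝕜] F₁) :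
    (E₂ →L[𝕜] F₂) →L[𝕜] E₁ →L[𝕜] F₁ :=
  ContinuousLinearMap.precomp F₁ J₁ ∘L ContinuousLinearMap.postcomp E₂ J₂

theorem compLeftRightL_injective {J₁ : E₁ →L[𝕜] E₂} {J₂ : F₂ →L[𝕜] F₁} (hJ₁ : DenseRange J₁)
    (hJ₂ : Function.Injective J₂) : Function.Injective (compLeftRightL J₁ J₂) := by
  intro S T hST
  refine ContinuousLinearMap.coeFn_injective (hJ₁.equalizer S.continuous T.continuous ?_)
  exact funext fun e ↦ hJ₂ (DFunLike.congr_fun hST e)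

end Operators

theorem analytic_in_weaker_spaces_general {Z E₁ E₂ F₁ F₂ : Type*}
    [NormedAddCommGroup Z] [NormedSpace ℂ Z]
    [NormedAddCommGroup E₁] [NormedSpace ℂ E₁] [NormedAddCommGroup E₂] [NormedSpace ℂ E₂]
    [NormedAddCommGroup F₁] [NormedSpace ℂ F₁]
    [NormedAddCommGroup F₂] [NormedSpace ℂ F₂] [CompleteSpace F₂]
    {X : Set Z} (hX : IsOpen X) {J₁ : E₁ →L[ℂ] E₂} (hJ₁ : DenseRange J₁)
    {J₂ : F₂ →L[ℂ] F₁} (hJ₂ : Function.Injective J₂)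
    {A : Z → E₁ →L[ℂ] F₁} (hA : AnalyticOnNhd ℂ A X) {B : Z → E₂ →L[ℂ] F₂}
    (hext : ∀ z ∈ X, ∀ e, J₂ (B z (J₁ e)) = A z e)
    (hbdd : ∀ z ∈ X, ∃ M : ℝ, ∀ᶠ w in 𝓝 z, ‖B w‖ ≤ M) :
    AnalyticOnNhd ℂ B X := by
  intro z hz
  obtain ⟨M, hM⟩ := hbdd z hz
  have hcomp : ∀ᶠ w in 𝓝 z, A w = compLeftRightL J₁ J₂ (B w) := by
    filter_upwards [hX.mem_nhds hz] with w hw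
    ext e
    exact (hext w hw e).symm
  have hΛB : AnalyticAt ℂ (compLeftRightL J₁ J₂ ∘ B) z := (hA z hz).congr hcomp
  exact analyticAt_of_injective_comp (Λ := compLeftRightL J₁ J₂)
    (compLeftRightL_injective hJ₁ hJ₂) hΛB hM

/-- Lemma on analyticity in weaker spaces: if `A : X → L(E₁,F₁)` is analytic (on an open
set `X` of a complex Banach space, serving as a chart of the Banach manifold), each `A z`
extends to a bounded operator `E₂ → F₂` through dense continuous embeddings
`J₁ : E₁ ↪ E₂` and `J₂ : F₂ ↪ F₁`, and the extensions are locally uniformly bounded in the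
`L(E₂,F₂)` norm, then the extension family is analytic as a map into `L(E₂,F₂)`. -/
theorem analytic_in_weaker_spaces
    {Z E₁ E₂ F₁ F₂ : Type*} [NormedAddCommGroup Z] [NormedSpace ℂ Z]
    [NormedAddCommGroup E₁] [NormedSpace ℂ E₁] [CompleteSpace E₁]
    [NormedAddCommGroup E₂] [NormedSpace ℂ E₂] [CompleteSpace E₂]
    [NormedAddCommGroup F₁] [NormedSpace ℂ F₁] [CompleteSpace F₁]
    [NormedAddCommGroup F₂] [NormedSpace ℂ F₂] [CompleteSpace F₂]
    (X : Set Z) (hXopen : IsOpen X)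
    (J₁ : E₁ →L[ℂ] E₂) (hJ₁inj : Function.Injective J₁)
    (hJ₁dense : DenseRange J₁)
    (J₂ : F₂ →L[ℂ] F₁) (hJ₂inj : Function.Injective J₂)
    (hJ₂dense : DenseRange J₂)
    (A : Z → E₁ →L[ℂ] F₁) (hA : AnalyticOnNhd ℂ A X)
    (B : Z → E₂ →L[ℂ] F₂)
    (hext : ∀ z ∈ X, ∀ e : E₁, J₂ (B z (J₁ e)) = A z e)
    (hbdd : ∀ z ∈ X, ∃ M r : ℝ, 0 < M ∧ 0 < r ∧
      ∀ w ∈ X, ‖w - z‖ < r → ‖B w‖ < M) :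
    AnalyticOnNhd ℂ B X := by
  refine analytic_in_weaker_spaces_general hXopen hJ₁dense hJ₂inj hA hext fun z hz ↦ ?_
  obtain ⟨M, r, -, hr, hM⟩ := hbdd z hz
  refine ⟨M, ?_⟩
  filter_upwards [hXopen.mem_nhds hz, ball_mem_nhds z hr] with w hwX hw
  exact (hM w hwX (mem_ball_iff_norm.1 hw)).le
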